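/- arXiv:1706.06516 — 3 statements merged into one kernel-verified Lean document; each statement's English description precedes it below -/
import Mathlib

section
/- Let M and H be n×n real symmetric matrices, let v^(1), …, v^(n) be an orthonormal basis of eigenvectors of M with M v^(s) = λ_s v^(s), and let ṽ^(t) be a unit eigenvector of M+H with (M+H) ṽ^(t) = λ̃_t ṽ^(t). If ‖H‖ < |λ̃_t| (spectral norm), then ṽ^(t) = Σ_{s=1}^n (λ_s/λ̃_t) ⟨ṽ^(t), v^(s)⟩ Σ_{k≥0} (H/λ̃_t)^k v^(s), where the inner Neumann series converges. -/
open Matrix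

/-- The spectral (operator) norm of a real square matrix. -/
noncomputable def specNorm {n : ℕ} (A : Matrix (Fin n) (Fin n) ℝ) : ℝ :=
  ‖Matrix.toEuclideanCLM (𝕜 := ℝ) A‖

section helpers
open scoped Matrix.Norms.L2Operator

theorem neumann_hasSum_aux {n : ℕ} (A : Matrix (Fin n) (Fin n) ℝ) (hA : specNorm A < 1) :
    ∃ S : Matrix (Fin n) (Fin n) ℝ, S * (1 - A) = 1 ∧
      ∀ w : Fin n → ℝ, HasSum (fun k : ℕ => (A ^ k).mulVec w) (S.mulVec w) := by
  have h : ‖A‖ < 1 := hA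
  have hs : Summable fun k : ℕ => A ^ k := summable_geometric_of_norm_lt_one h
  refine ⟨∑' k : ℕ, A ^ k, geom_series_mul_neg A h, fun w => ?_⟩
  let f : Matrix (Fin n) (Fin n) ℝ →+ (Fin n → ℝ) :=
    { toFun := fun B => B.mulVec w
      map_zero' := Matrix.zero_mulVec w
      map_add' := fun B C => Matrix.add_mulVec B C w }
  have hf : Continuous f := Continuous.matrix_mulVec continuous_id continuous_const
  exact hs.hasSum.map f hf

end helpers

theorem specNorm_inv_smul_lt {n : ℕ} (H : Matrix (Fin n) (Fin n) ℝ) (t : ℝ)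
    (h : specNorm H < |t|) : t ≠ 0 ∧ specNorm (t⁻¹ • H) < 1 := by
  have h0 : 0 < |t| := lt_of_le_of_lt (norm_nonneg _) h
  refine ⟨abs_pos.mp h0, ?_⟩
  unfold specNorm at *
  rw [map_smul, norm_smul, norm_inv, Real.norm_eq_abs, inv_mul_lt_one₀ h0]
  exact h

theorem orthonormal_expand {n : ℕ} (v : Fin n → (Fin n → ℝ))
    (hON : ∀ s r, v s ⬝ᵥ v r = if s = r then (1 : ℝ) else 0) (w : Fin n → ℝ) :
    w = ∑ s, (w ⬝ᵥ v s) • v s := by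
  have h1 : (Matrix.of v) * (Matrix.of v)ᵀ = 1 := by
    ext s r
    rw [Matrix.mul_apply', Matrix.one_apply, ← hON s r]
    rfl
  have h2 := mul_eq_one_comm.mp h1
  have h3 : ((Matrix.of v)ᵀ).mulVec ((Matrix.of v).mulVec w) = w := by
    rw [Matrix.mulVec_mulVec, h2, Matrix.one_mulVec]
  rw [Matrix.mulVec_transpose, Matrix.vecMul_eq_sum] at h3
  rw [← h3]
  conv_rhs => rw [h3]
  refine Finset.sum_congr rfl fun s _ => ?_
  rw [dotProduct_comm w]
  rfl

/-- The Neumann trick: expansion of a perturbed eigenvector in the unperturbed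
eigenbasis. -/
theorem neumann_expansion {n : ℕ} (M H : Matrix (Fin n) (Fin n) ℝ)
    (hM : M.IsSymm) (hH : H.IsSymm)
    (lam : Fin n → ℝ) (v : Fin n → (Fin n → ℝ))
    (hON : ∀ s r, v s ⬝ᵥ v r = if s = r then (1 : ℝ) else 0)
    (heig : ∀ s, M.mulVec (v s) = lam s • v s)
    (tlam : ℝ) (tv : Fin n → ℝ) (htv : tv ⬝ᵥ tv = 1)
    (hteig : (M + H).mulVec tv = tlam • tv)
    (hnorm : specNorm H < |tlam|) :
    (∀ s, Summable fun k : ℕ => ((tlam⁻¹ • H) ^ k).mulVec (v s)) ∧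
      tv = ∑ s, (lam s / tlam) • (tv ⬝ᵥ v s) •
        ∑' k : ℕ, ((tlam⁻¹ • H) ^ k).mulVec (v s) := by
  obtain ⟨h0, hA⟩ := specNorm_inv_smul_lt H tlam hnorm
  obtain ⟨S, hS, hsum⟩ := neumann_hasSum_aux (tlam⁻¹ • H) hA
  refine ⟨fun s => (hsum (v s)).summable, ?_⟩
  simp_rw [fun s => (hsum (v s)).tsum_eq]
  have hMtv : M.mulVec tv = ∑ s, lam s • (tv ⬝ᵥ v s) • v s := by
    conv_lhs => rw [orthonormal_expand v hON tv]
    rw [Matrix.mulVec_sum]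
    refine Finset.sum_congr rfl fun s _ => ?_
    rw [Matrix.mulVec_smul, heig, smul_comm]
  have hres : (1 - tlam⁻¹ • H).mulVec tv = tlam⁻¹ • M.mulVec tv := by
    have h : M.mulVec tv = tlam • tv - H.mulVec tv := by
      rw [← hteig, Matrix.add_mulVec, add_sub_cancel_right]
    rw [h, Matrix.sub_mulVec, Matrix.one_mulVec, Matrix.smul_mulVec, smul_sub,
      inv_smul_smul₀ h0]
  calc tv = (S * (1 - tlam⁻¹ • H)).mulVec tv := by rw [hS, Matrix.one_mulVec]
    _ = S.mulVec (tlam⁻¹ • ∑ s, lam s • (tv ⬝ᵥ v s) • v s) := by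
      rw [← Matrix.mulVec_mulVec, hres, hMtv]
    _ = _ := by
      rw [Matrix.mulVec_smul, Matrix.mulVec_sum, Finset.smul_sum]
      refine Finset.sum_congr rfl fun s _ => ?_
      rw [Matrix.mulVec_smul, Matrix.mulVec_smul, smul_smul, div_eq_inv_mul]
end

section
/- Let X and Y be n×d real matrices (d ≤ n) whose columns are orthonormal, and let 0 ≤ δ ≤ 1. Suppose every singular value σ of the d×d matrix XᵀY satisfies σ ≥ √(1 − δ²) (equivalently, the sine of every principal angle between the column spaces of X and Y is at most δ). Then there exists an n×d real matrix X̂ with orthonormal columns x̂_1, …, x̂_d satisfying X̂ X̂ᵀ = X Xᵀ (so the columns of X̂ form an orthonormal basis of the column space of X) such that, writing y_1, …, y_d for the columns of Y: ⟨x̂_i, y_i⟩ ≥ 1 − δ² for every i, and |⟨x̂_i, y_j⟩| ≤ δ² whenever i ≠ j. -/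
open Matrix

lemma aux_main {n d : ℕ}
    (X Y : Matrix (Fin n) (Fin d) ℝ)
    (hX : Xᵀ * X = 1) (hY : Yᵀ * Y = 1)
    (δ : ℝ) (hδ0 : 0 ≤ δ) (hδ1 : δ < 1)
    (V : Matrix (Fin d) (Fin d) ℝ) (l : Fin d → ℝ) (hV : Vᵀ * V = 1)
    (hM : (Xᵀ * Y)ᵀ * (Xᵀ * Y) = V * diagonal l * Vᵀ)
    (hl : ∀ i, 1 - δ ^ 2 ≤ l i) :
    ∃ Xh : Matrix (Fin n) (Fin d) ℝ,
      Xhᵀ * Xh = 1 ∧ Xh * Xhᵀ = X * Xᵀ ∧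
      (∀ i, 1 - δ ^ 2 ≤ Xhᵀ i ⬝ᵥ Yᵀ i) ∧
      (∀ i j, i ≠ j → |Xhᵀ i ⬝ᵥ Yᵀ j| ≤ δ ^ 2) := by
  have hV2 : V * Vᵀ = 1 := mul_eq_one_comm.mp hV
  have hd : 0 < 1 - δ ^ 2 := by nlinarith
  have hlpos : ∀ i, 0 < l i := fun i => hd.trans_le (hl i)
  -- upper bound
  have hl1 : ∀ i, l i ≤ 1 := by
    intro i
    have h1 : (Y * V - X * (Xᵀ * Y * V))ᵀ * (Y * V - X * (Xᵀ * Y * V)) = 1 - diagonal l := by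
      have e1 : Vᵀ * ((Xᵀ * Y)ᵀ * (Xᵀ * Y)) * V = diagonal l := by
        rw [hM]
        calc Vᵀ * (V * diagonal l * Vᵀ) * V = (Vᵀ * V) * diagonal l * (Vᵀ * V) := by
              simp only [Matrix.mul_assoc]
          _ = _ := by simp [hV]
      have e2 : (Y * V)ᵀ * (Y * V) = 1 := by
        calc (Y * V)ᵀ * (Y * V) = Vᵀ * (Yᵀ * Y) * V := by
              simp only [transpose_mul, Matrix.mul_assoc]
          _ = _ := by simp [hY, hV]
      have e3 : (X * (Xᵀ * Y * V))ᵀ * (X * (Xᵀ * Y * V)) = diagonal l := by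
        calc (X * (Xᵀ * Y * V))ᵀ * (X * (Xᵀ * Y * V))
            = (Xᵀ * Y * V)ᵀ * (Xᵀ * X) * (Xᵀ * Y * V) := by
              simp only [transpose_mul, Matrix.mul_assoc]
          _ = Vᵀ * ((Xᵀ * Y)ᵀ * (Xᵀ * Y)) * V := by
              rw [hX]; simp only [transpose_mul, Matrix.mul_assoc, Matrix.one_mul]
          _ = _ := e1
      have e4 : (Y * V)ᵀ * (X * (Xᵀ * Y * V)) = diagonal l := by
        rw [← e1]; simp only [transpose_mul, transpose_transpose, Matrix.mul_assoc]
      have e5 : (X * (Xᵀ * Y * V))ᵀ * (Y * V) = diagonal l := by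
        rw [← e1]; simp only [transpose_mul, transpose_transpose, Matrix.mul_assoc]
      rw [transpose_sub, Matrix.sub_mul, Matrix.mul_sub, Matrix.mul_sub, e2, e3, e4, e5]
      simp
    have h2 := congrFun (congrFun h1 i) i
    rw [Matrix.mul_apply] at h2
    simp only [transpose_apply, Matrix.sub_apply (1 : Matrix (Fin d) (Fin d) ℝ), one_apply_eq,
      diagonal_apply_eq] at h2
    have h3 := Finset.sum_nonneg (fun k (_ : k ∈ Finset.univ) =>
      mul_self_nonneg ((Y * V - X * (Xᵀ * Y * V)) k i))
    linarith
  obtain ⟨s, hs⟩ : ∃ s : Fin d → ℝ, s = fun i => Real.sqrt (l i) := ⟨_, rfl⟩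
  have hspos : ∀ i, 0 < s i := fun i => by rw [hs]; exact Real.sqrt_pos.mpr (hlpos i)
  have hss : ∀ i, s i * s i = l i := fun i => by
    rw [hs]; exact Real.mul_self_sqrt (hlpos i).le
  have hs1 : ∀ i, s i ≤ 1 := fun i => by nlinarith [hss i, hl1 i, hspos i]
  have hsl : ∀ i, 1 - δ ^ 2 ≤ s i := fun i => by nlinarith [hss i, hl i, hs1 i, hspos i]
  set A := Xᵀ * Y with hAdef
  set Q := V * diagonal (fun i => (s i)⁻¹) * Vᵀ with hQ
  have hQt : Qᵀ = Q := by simp [hQ, transpose_mul, Matrix.mul_assoc]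
  have hQM : Q * (Aᵀ * A) = V * diagonal s * Vᵀ := by
    rw [hM, hQ]
    calc V * diagonal (fun i => (s i)⁻¹) * Vᵀ * (V * diagonal l * Vᵀ)
        = V * (diagonal (fun i => (s i)⁻¹) * (Vᵀ * V) * diagonal l) * Vᵀ := by
          simp only [Matrix.mul_assoc]
      _ = _ := by
          rw [hV, Matrix.mul_one, diagonal_mul_diagonal]
          congr 3
          ext i
          rw [← hss i]; field_simp [(hspos i).ne']
  have hQMQ : Q * (Aᵀ * A) * Q = 1 := by
    rw [hQM, hQ]
    calc V * diagonal s * Vᵀ * (V * diagonal (fun i => (s i)⁻¹) * Vᵀ)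
        = V * (diagonal s * (Vᵀ * V) * diagonal (fun i => (s i)⁻¹)) * Vᵀ := by
          simp only [Matrix.mul_assoc]
      _ = V * 1 * Vᵀ := by
          rw [hV, Matrix.mul_one, diagonal_mul_diagonal, ← diagonal_one]
          congr 3
          ext i
          exact mul_inv_cancel₀ (hspos i).ne'
      _ = 1 := by simp [hV2]
  have hU : (A * Q)ᵀ * (A * Q) = 1 := by
    rw [← hQMQ, transpose_mul, hQt]; simp only [Matrix.mul_assoc]
  have hU2 : (A * Q) * (A * Q)ᵀ = 1 := mul_eq_one_comm.mp hU
  have hP : (X * (A * Q))ᵀ * Y = V * diagonal s * Vᵀ := by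
    rw [← hQM, transpose_mul, transpose_mul, hQt, hAdef]; simp only [Matrix.mul_assoc]
  have hent : ∀ i j, (X * (A * Q))ᵀ i ⬝ᵥ Yᵀ j = ∑ k, V i k * s k * V j k := by
    intro i j
    have : (X * (A * Q))ᵀ i ⬝ᵥ Yᵀ j = ((X * (A * Q))ᵀ * Y) i j := rfl
    rw [this, hP, Matrix.mul_apply]
    simp [mul_diagonal]
  have hVe : ∀ i j, ∑ k, V i k * V j k = (1 : Matrix (Fin d) (Fin d) ℝ) i j := by
    intro i j
    rw [← hV2, Matrix.mul_apply]; rfl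
  have hVd : ∀ i, ∑ k, V i k * V i k = 1 := fun i => by rw [hVe, one_apply_eq]
  refine ⟨X * (A * Q), ?_, ?_, ?_, ?_⟩
  · calc (X * (A * Q))ᵀ * (X * (A * Q)) = (A * Q)ᵀ * (Xᵀ * X) * (A * Q) := by
          rw [transpose_mul X]; simp only [Matrix.mul_assoc]
      _ = 1 := by rw [hX, Matrix.mul_one, hU]
  · calc (X * (A * Q)) * (X * (A * Q))ᵀ = X * ((A * Q) * (A * Q)ᵀ) * Xᵀ := by
          rw [transpose_mul X]; simp only [Matrix.mul_assoc]
      _ = _ := by rw [hU2, Matrix.mul_one]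
  · intro i
    rw [hent]
    calc 1 - δ ^ 2 = ∑ k, (1 - δ ^ 2) * (V i k * V i k) := by
          rw [← Finset.mul_sum, hVd, mul_one]
      _ ≤ _ := Finset.sum_le_sum fun k _ => by
          nlinarith [mul_le_mul_of_nonneg_right (hsl k) (mul_self_nonneg (V i k))]
  · intro i j hij
    rw [hent]
    have h0 : ∑ k, V i k * s k * V j k = - ∑ k, (1 - s k) * (V i k * V j k) := by
      have h1 := hVe i j
      rw [one_apply_ne hij] at h1
      have : ∑ k, (1 - s k) * (V i k * V j k)
          = ∑ k, V i k * V j k - ∑ k, V i k * s k * V j k := by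
        rw [← Finset.sum_sub_distrib]
        exact Finset.sum_congr rfl fun k _ => by ring
      rw [this, h1]; ring
    rw [h0, abs_neg]
    calc |∑ k, (1 - s k) * (V i k * V j k)| ≤ ∑ k, |(1 - s k) * (V i k * V j k)| :=
          Finset.abs_sum_le_sum_abs _ _
      _ ≤ ∑ k, δ ^ 2 / 2 * (V i k * V i k + V j k * V j k) := by
          refine Finset.sum_le_sum fun k _ => ?_
          rw [abs_mul, abs_of_nonneg (by linarith [hs1 k])]
          have a1 : |V i k * V j k| ≤ (V i k * V i k + V j k * V j k) / 2 := by
            rw [abs_le]; constructor <;>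
            nlinarith [mul_self_nonneg (V i k - V j k), mul_self_nonneg (V i k + V j k)]
          calc (1 - s k) * |V i k * V j k|
              ≤ δ ^ 2 * ((V i k * V i k + V j k * V j k) / 2) :=
                mul_le_mul (by linarith [hsl k]) a1 (abs_nonneg _) (by positivity)
            _ = _ := by ring
      _ = δ ^ 2 := by
          rw [← Finset.mul_sum, Finset.sum_add_distrib, hVd, hVd]; ring

lemma aux_one {n d : ℕ}
    (X Y : Matrix (Fin n) (Fin d) ℝ)
    (hX : Xᵀ * X = 1) (hY : Yᵀ * Y = 1) :
    ∃ Xh : Matrix (Fin n) (Fin d) ℝ,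
      Xhᵀ * Xh = 1 ∧ Xh * Xhᵀ = X * Xᵀ ∧
      (∀ i, 0 ≤ Xhᵀ i ⬝ᵥ Yᵀ i) ∧
      (∀ i j, i ≠ j → |Xhᵀ i ⬝ᵥ Yᵀ j| ≤ 1) := by
  obtain ⟨e, he⟩ : ∃ e : Fin d → ℝ,
      e = fun i => if 0 ≤ Xᵀ i ⬝ᵥ Yᵀ i then 1 else -1 := ⟨_, rfl⟩
  have hee : ∀ i, e i * e i = 1 := fun i => by rw [he]; dsimp only; split_ifs <;> norm_num
  have hD : diagonal e * diagonal e = 1 := by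
    rw [diagonal_mul_diagonal, ← diagonal_one]; congr 1; ext i; exact hee i
  have h1 : (X * diagonal e)ᵀ * (X * diagonal e) = 1 := by
    calc (X * diagonal e)ᵀ * (X * diagonal e) = diagonal e * (Xᵀ * X) * diagonal e := by
          rw [transpose_mul, diagonal_transpose]; simp only [Matrix.mul_assoc]
      _ = 1 := by rw [hX, Matrix.mul_one, hD]
  refine ⟨X * diagonal e, h1, ?_, ?_, ?_⟩
  · calc (X * diagonal e) * (X * diagonal e)ᵀ = X * (diagonal e * diagonal e) * Xᵀ := by
          rw [transpose_mul, diagonal_transpose]; simp only [Matrix.mul_assoc]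
      _ = _ := by rw [hD, Matrix.mul_one]
  · intro i
    have : (X * diagonal e)ᵀ i ⬝ᵥ Yᵀ i = e i * (Xᵀ i ⬝ᵥ Yᵀ i) := by
      simp only [dotProduct, transpose_apply, mul_diagonal, Finset.mul_sum]
      exact Finset.sum_congr rfl fun k _ => by ring
    rw [this, he]
    dsimp only
    split_ifs with h
    · simpa using h
    · linarith
  · intro i j _
    have a : ∑ k, (X * diagonal e) k i * (X * diagonal e) k i = 1 := by
      have := congrFun (congrFun h1 i) i
      rwa [Matrix.mul_apply, one_apply_eq] at this
    have b : ∑ k, Y k j * Y k j = 1 := by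
      have := congrFun (congrFun hY j) j
      rwa [Matrix.mul_apply, one_apply_eq] at this
    generalize X * diagonal e = Z at a
    have c : |Zᵀ i ⬝ᵥ Yᵀ j| ≤ ∑ k, (Z k i * Z k i + Y k j * Y k j) / 2 := by
      refine (Finset.abs_sum_le_sum_abs _ _).trans (Finset.sum_le_sum fun k _ => ?_)
      simp only [transpose_apply]
      rw [abs_le]; constructor <;>
        nlinarith [mul_self_nonneg (Z k i - Y k j), mul_self_nonneg (Z k i + Y k j)]
    rw [← Finset.sum_div, Finset.sum_add_distrib, a, b] at c
    linarith



/-- Alignment of orthonormal bases of two subspaces whose principal angles are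
all small: if every singular value of `XᵀY` is at least `√(1-δ²)`, there is an
orthonormal basis `X̂` of the column space of `X` whose columns are aligned with
the columns of `Y`. -/
theorem aligned_basis_of_small_principal_angles {n d : ℕ} (hdn : d ≤ n)
    (X Y : Matrix (Fin n) (Fin d) ℝ)
    (hX : Xᵀ * X = 1) (hY : Yᵀ * Y = 1)
    (δ : ℝ) (hδ0 : 0 ≤ δ) (hδ1 : δ ≤ 1)
    (hA : ((Xᵀ * Y)ᵀ * (Xᵀ * Y)).IsHermitian)
    (hsv : ∀ i, Real.sqrt (1 - δ ^ 2) ≤ Real.sqrt (hA.eigenvalues i)) :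
    ∃ Xh : Matrix (Fin n) (Fin d) ℝ,
      Xhᵀ * Xh = 1 ∧ Xh * Xhᵀ = X * Xᵀ ∧
      (∀ i, 1 - δ ^ 2 ≤ Xhᵀ i ⬝ᵥ Yᵀ i) ∧
      (∀ i j, i ≠ j → |Xhᵀ i ⬝ᵥ Yᵀ j| ≤ δ ^ 2) := by
  rcases hδ1.lt_or_eq with h | h
  · refine aux_main X Y hX hY δ hδ0 h (hA.eigenvectorUnitary : Matrix (Fin d) (Fin d) ℝ)
      hA.eigenvalues ?_ ?_ ?_
    · have := Unitary.coe_star_mul_self hA.eigenvectorUnitary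
      rwa [star_eq_conjTranspose, conjTranspose_eq_transpose_of_trivial] at this
    · have := hA.spectral_theorem
      rw [Unitary.conjStarAlgAut_apply, star_eq_conjTranspose,
        conjTranspose_eq_transpose_of_trivial] at this
      exact this
    · intro i
      have hd : 0 < 1 - δ ^ 2 := by nlinarith
      by_contra hc
      exact absurd (hsv i) (not_le.mpr (Real.sqrt_lt_sqrt_iff_of_pos hd |>.mpr (not_le.mp hc)))
  · subst h
    simpa using aux_one X Y hX hY
end

section
/- (Davis–Kahan for statisticians.) Let M and H be n×n real symmetric matrices with eigenvalues λ_1 ≥ ⋯ ≥ λ_n for M and λ̃_1 ≥ ⋯ ≥ λ̃_n for M+H. Fix 1 ≤ r ≤ s ≤ n, set δ = min(λ_{r−1} − λ_r, λ_s − λ_{s+1}) (with the conventions λ_0 = +∞ and λ_{n+1} = −∞) and assume δ > 0. Let d = s − r + 1, and let U = (v^(r), …, v^(s)) and Ũ = (ṽ^(r), …, ṽ^(s)) be n×d matrices with orthonormal columns such that M v^(i) = λ_i v^(i) and (M+H) ṽ^(i) = λ̃_i ṽ^(i) for all i ∈ {r, …, s}. Then √( d − ‖Uᵀ Ũ‖_F²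 ) ≤ 2 √d · ‖H‖ / δ, where the left-hand side equals the Frobenius norm of sin Θ(U, Ũ), the diagonal matrix of sines of the principal angles between the column spaces of U and Ũ. -/
open Matrix

lemma dk_parseval {n : ℕ} (w : Fin n → (Fin n → ℝ))
    (hw : ∀ i j, w i ⬝ᵥ w j = if i = j then (1 : ℝ) else 0) (x y : Fin n → ℝ) :
    ∑ k, (w k ⬝ᵥ x) * (w k ⬝ᵥ y) = x ⬝ᵥ y := by
  have h1 : (Matrix.of w) * (Matrix.of w)ᵀ = 1 := by
    ext i j
    have := hw i j
    simp only [Matrix.mul_apply, Matrix.one_apply, Matrix.transpose_apply, Matrix.of_apply]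
    simpa [dotProduct] using this
  have h2 : (Matrix.of w)ᵀ * (Matrix.of w) = 1 := mul_eq_one_comm.mp h1
  have h3 : ((Matrix.of w).mulVec x) ⬝ᵥ ((Matrix.of w).mulVec y) = x ⬝ᵥ y := by
    rw [Matrix.dotProduct_mulVec, Matrix.vecMul_mulVec, h2, Matrix.vecMul_one]
  exact h3

lemma dk_symm {n : ℕ} {M : Matrix (Fin n) (Fin n) ℝ} (hM : M.IsSymm) (x y : Fin n → ℝ) :
    x ⬝ᵥ M.mulVec y = M.mulVec x ⬝ᵥ y := by
  rw [Matrix.dotProduct_mulVec, ← Matrix.mulVec_transpose, hM.eq]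

lemma dk_norm {n : ℕ} (H : Matrix (Fin n) (Fin n) ℝ) (x : Fin n → ℝ) :
    H.mulVec x ⬝ᵥ H.mulVec x ≤ specNorm H ^ 2 * (x ⬝ᵥ x) := by
  have h := (Matrix.toEuclideanCLM (𝕜 := ℝ) H).le_opNorm (WithLp.toLp 2 x)
  have h2 := pow_le_pow_left₀ (norm_nonneg _) h 2
  rw [mul_pow, EuclideanSpace.norm_sq_eq, EuclideanSpace.norm_sq_eq] at h2
  simpa [specNorm, dotProduct, ← sq, Matrix.toEuclideanCLM_toLp] using h2

lemma dk_nonneg {n : ℕ} (H : Matrix (Fin n) (Fin n) ℝ) : 0 ≤ specNorm H := norm_nonneg _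

lemma dk_quad {n : ℕ} (H : Matrix (Fin n) (Fin n) ℝ) (x : Fin n → ℝ) :
    |x ⬝ᵥ H.mulVec x| ≤ specNorm H * (x ⬝ᵥ x) := by
  have hx : 0 ≤ x ⬝ᵥ x := Finset.sum_nonneg fun i _ => mul_self_nonneg _
  refine abs_le_of_sq_le_sq ?_ (mul_nonneg (dk_nonneg H) hx)
  have h1 : (x ⬝ᵥ H.mulVec x) ^ 2 ≤ (x ⬝ᵥ x) * (H.mulVec x ⬝ᵥ H.mulVec x) := by
    have := Finset.sum_mul_sq_le_sq_mul_sq Finset.univ x (H.mulVec x)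
    simpa [dotProduct, ← sq] using this
  have h2 := mul_le_mul_of_nonneg_left (dk_norm H x) hx
  nlinarith

lemma dk_weyl {n : ℕ} (M H : Matrix (Fin n) (Fin n) ℝ)
    (hM : M.IsSymm) (hH : H.IsSymm)
    (lam tlam : Fin n → ℝ) (hlam : Antitone lam) (htlam : Antitone tlam)
    (w : Fin n → (Fin n → ℝ))
    (hw : ∀ i j, w i ⬝ᵥ w j = if i = j then (1 : ℝ) else 0)
    (hMw : ∀ i, M.mulVec (w i) = lam i • w i)
    (v : Fin n → (Fin n → ℝ))
    (hv : ∀ i j, v i ⬝ᵥ v j = if i = j then (1 : ℝ) else 0)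
    (hMv : ∀ i, (M + H).mulVec (v i) = tlam i • v i) (j : Fin n) :
    lam j ≤ tlam j + specNorm H := by
  obtain ⟨x, hx0, hx⟩ : ∃ x : Fin n → ℝ, x ≠ 0 ∧
      (Matrix.of fun k => if k < j then v k else if j < k then w k else 0).mulVec x = 0 := by
    apply Matrix.exists_mulVec_eq_zero_iff.mpr
    apply Matrix.det_eq_zero_of_row_eq_zero j
    intro i
    simp
  have hxw : ∀ k, j < k → w k ⬝ᵥ x = 0 := by
    intro k hk
    have := congrFun hx k
    simpa [Matrix.mulVec, hk, not_lt.mpr hk.le] using this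
  have hxv : ∀ k, k < j → v k ⬝ᵥ x = 0 := by
    intro k hk
    have := congrFun hx k
    simpa [Matrix.mulVec, hk] using this
  have hpos : 0 < x ⬝ᵥ x := by
    have h0 : 0 ≤ x ⬝ᵥ x := Finset.sum_nonneg fun i _ => mul_self_nonneg _
    exact lt_of_le_of_ne h0 (fun h => hx0 (dotProduct_self_eq_zero.mp h.symm))
  have e1 : lam j * (x ⬝ᵥ x) ≤ x ⬝ᵥ M.mulVec x := by
    rw [← dk_parseval w hw x x, ← dk_parseval w hw x (M.mulVec x), Finset.mul_sum]
    apply Finset.sum_le_sum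
    intro k _
    rw [dk_symm hM, hMw, smul_dotProduct, smul_eq_mul]
    rcases le_or_gt k j with hk | hk
    · nlinarith [hlam hk, mul_self_nonneg (w k ⬝ᵥ x)]
    · simp [hxw k hk]
  have e2 : x ⬝ᵥ (M + H).mulVec x ≤ tlam j * (x ⬝ᵥ x) := by
    rw [← dk_parseval v hv x x, ← dk_parseval v hv x ((M + H).mulVec x), Finset.mul_sum]
    apply Finset.sum_le_sum
    intro k _
    rw [dk_symm (hM.add hH), hMv, smul_dotProduct, smul_eq_mul]
    rcases le_or_gt j k with hk | hk
    · nlinarith [htlam hk, mul_self_nonneg (v k ⬝ᵥ x)]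
    · simp [hxv k hk]
  rw [Matrix.add_mulVec, dotProduct_add] at e2
  have e3 := (abs_le.mp (dk_quad H x)).1
  by_contra hc
  push Not at hc
  nlinarith

lemma dk_specNorm_neg {n : ℕ} (H : Matrix (Fin n) (Fin n) ℝ) : specNorm (-H) = specNorm H := by
  simp [specNorm]

/-- Davis–Kahan theorem for statisticians: with `δ = min(λ_{r-1} - λ_r, λ_s - λ_{s+1}) > 0`
(conventions `λ_0 = ∞`, `λ_{n+1} = -∞`), the Frobenius norm of the sines of the principal
angles between the eigenspaces `U` and `Ũ` is at most `2 √d ‖H‖ / δ`. -/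
theorem davis_kahan_statisticians {n : ℕ} (M H : Matrix (Fin n) (Fin n) ℝ)
    (hM : M.IsSymm) (hH : H.IsSymm)
    (lam tlam : Fin n → ℝ) (hlam : Antitone lam) (htlam : Antitone tlam)
    (hMspec : ∃ w : Fin n → (Fin n → ℝ),
      (∀ i j, w i ⬝ᵥ w j = if i = j then (1 : ℝ) else 0) ∧
      ∀ i, M.mulVec (w i) = lam i • w i)
    (hMHspec : ∃ w : Fin n → (Fin n → ℝ),
      (∀ i j, w i ⬝ᵥ w j = if i = j then (1 : ℝ) else 0) ∧
      ∀ i, (M + H).mulVec (w i) = tlam i • w i)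
    (r s : Fin n) (hrs : r ≤ s)
    (δ : ℝ) (hδpos : 0 < δ)
    (hδr : ∀ i : Fin n, (i : ℕ) + 1 = (r : ℕ) → δ ≤ lam i - lam r)
    (hδs : ∀ i : Fin n, (i : ℕ) = (s : ℕ) + 1 → δ ≤ lam s - lam i)
    (U tU : Matrix (Fin n) {i : Fin n // r ≤ i ∧ i ≤ s} ℝ)
    (hU : Uᵀ * U = 1) (htU : tUᵀ * tU = 1)
    (hUeig : ∀ i : {i : Fin n // r ≤ i ∧ i ≤ s}, M.mulVec (Uᵀ i) = lam i.1 • Uᵀ i)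
    (htUeig : ∀ i : {i : Fin n // r ≤ i ∧ i ≤ s},
      (M + H).mulVec (tUᵀ i) = tlam i.1 • tUᵀ i) :
    Real.sqrt ((((s : ℕ) - (r : ℕ) + 1 : ℕ) : ℝ) - ∑ i, ∑ j, ((Uᵀ * tU) i j) ^ 2) ≤
      2 * Real.sqrt (((s : ℕ) - (r : ℕ) + 1 : ℕ)) * specNorm H / δ := by
  obtain ⟨w0, hw0, hMw0⟩ := hMspec
  obtain ⟨v, hv, hMv⟩ := hMHspec
  have hweyl : ∀ j, |tlam j - lam j| ≤ specNorm H := by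
    intro j
    have h1 := dk_weyl M H hM hH lam tlam hlam htlam w0 hw0 hMw0 v hv hMv j
    have h2 := dk_weyl (M + H) (-H) (hM.add hH) hH.neg tlam lam htlam hlam v hv hMv w0 hw0
      (by simpa using hMw0) j
    rw [dk_specNorm_neg] at h2
    rw [abs_le]
    constructor <;> linarith
  -- separation
  have hsep : ∀ k j : Fin n, ¬ (r ≤ k ∧ k ≤ s) → (r ≤ j ∧ j ≤ s) →
      δ ^ 2 ≤ (lam k - lam j) ^ 2 := by
    intro k j hk hj
    by_cases hkr : r ≤ k
    · have hks : s < k := by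
        by_contra h
        exact hk ⟨hkr, not_lt.mp h⟩
      have hks' : (s : ℕ) < k := hks
      have h1 := hδs ⟨s + 1, by omega⟩ rfl
      have h2 : lam k ≤ lam ⟨s + 1, by omega⟩ := hlam (Fin.le_def.mpr (by simp; omega))
      have h3 := hlam hj.2
      nlinarith
    · have hkr' : (k : ℕ) < r := not_le.mp hkr
      have h1 := hδr ⟨r - 1, by omega⟩ (by simp; omega)
      have h2 : lam ⟨r - 1, by omega⟩ ≤ lam k := hlam (Fin.le_def.mpr (by simp; omega))
      have h3 := hlam hj.1
      nlinarith
  have hUU : ∀ i j, Uᵀ i ⬝ᵥ Uᵀ j = if i = j then (1 : ℝ) else 0 := by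
    intro i j
    have := congrFun (congrFun hU i) j
    rw [Matrix.one_apply] at this
    exact this
  have htUU : ∀ j, tUᵀ j ⬝ᵥ tUᵀ j = 1 := by
    intro j
    have := congrFun (congrFun htU j) j
    rw [Matrix.one_apply, if_pos rfl] at this
    exact this
  have hcross : ∀ (i : {i : Fin n // r ≤ i ∧ i ≤ s}) (k : Fin n), ¬ (r ≤ k ∧ k ≤ s) →
      Uᵀ i ⬝ᵥ w0 k = 0 := by
    intro i k hk
    have h1 := dk_symm hM (Uᵀ i) (w0 k)
    rw [hMw0, hUeig, smul_dotProduct, dotProduct_smul, smul_eq_mul, smul_eq_mul] at h1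
    have h2 := hsep k i.1 hk i.2
    have h3 : (lam k - lam i.1) * (Uᵀ i ⬝ᵥ w0 k) = 0 := by linarith
    rcases mul_eq_zero.mp h3 with h | h
    · rw [h] at h2
      nlinarith
    · exact h
  obtain ⟨w, hwdef⟩ : ∃ w : Fin n → Fin n → ℝ, ∀ k, w k =
      if h : r ≤ k ∧ k ≤ s then Uᵀ ⟨k, h⟩ else w0 k := ⟨_, fun _ => rfl⟩
  have hw : ∀ i j, w i ⬝ᵥ w j = if i = j then (1 : ℝ) else 0 := by
    intro i j
    rw [hwdef, hwdef]
    by_cases hi : r ≤ i ∧ i ≤ s <;> by_cases hj : r ≤ j ∧ j ≤ s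
    · rw [dif_pos hi, dif_pos hj, hUU]
      simp
    · rw [dif_pos hi, dif_neg hj, hcross _ _ hj, if_neg]
      rintro rfl
      exact hj hi
    · rw [dif_neg hi, dif_pos hj, dotProduct_comm, hcross _ _ hi, if_neg]
      rintro rfl
      exact hi hj
    · rw [dif_neg hi, dif_neg hj, hw0]
  have hMw : ∀ i, M.mulVec (w i) = lam i • w i := by
    intro i
    rw [hwdef]
    by_cases hi : r ≤ i ∧ i ≤ s
    · rw [dif_pos hi, hUeig]
    · rw [dif_neg hi, hMw0]
  have hcol : ∀ j : {i : Fin n // r ≤ i ∧ i ≤ s},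
      δ ^ 2 * (1 - ∑ i, ((Uᵀ * tU) i j) ^ 2) ≤ 4 * specNorm H ^ 2 := by
    intro j
    set x := tUᵀ j with hx
    set y := M.mulVec x - lam j.1 • x with hy
    have hxx : x ⬝ᵥ x = 1 := htUU j
    have hU1 : ∑ i, ((Uᵀ * tU) i j) ^ 2 =
        ∑ k : Fin n, if r ≤ k ∧ k ≤ s then (w k ⬝ᵥ x) ^ 2 else 0 := by
      rw [← Finset.sum_filter, ← Finset.sum_subtype_eq_sum_filter]
      rw [← Finset.subtype_univ]
      apply Finset.sum_congr rfl
      intro i _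
      rw [hwdef, dif_pos i.2]
      rfl
    have hp : ∑ k, (w k ⬝ᵥ x) ^ 2 = 1 := by
      rw [← hxx, ← dk_parseval w hw x x]
      simp [sq]
    have hwy : ∀ k, w k ⬝ᵥ y = (lam k - lam j.1) * (w k ⬝ᵥ x) := by
      intro k
      rw [hy, dotProduct_sub, dk_symm hM, hMw, smul_dotProduct, dotProduct_smul, smul_eq_mul,
        smul_eq_mul]
      ring
    have hlow : δ ^ 2 * (1 - ∑ i, ((Uᵀ * tU) i j) ^ 2) ≤ y ⬝ᵥ y := by
      rw [hU1, ← hp, ← dk_parseval w hw y y, ← Finset.sum_sub_distrib, Finset.mul_sum]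
      apply Finset.sum_le_sum
      intro k _
      rw [hwy]
      by_cases hk : r ≤ k ∧ k ≤ s
      · rw [if_pos hk, sub_self, mul_zero]
        exact mul_self_nonneg _
      · rw [if_neg hk, sub_zero]
        have := mul_le_mul_of_nonneg_right (hsep k j.1 hk j.2) (sq_nonneg (w k ⬝ᵥ x))
        nlinarith
    have hyy : y = (tlam j.1 - lam j.1) • x - H.mulVec x := by
      have := htUeig j
      rw [Matrix.add_mulVec, ← hx] at this
      rw [hy, sub_smul, ← this]
      abel
    refine hlow.trans ?_
    have h1 := hweyl j.1
    have h2 := dk_norm H x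
    have h3 := dk_quad H x
    rw [hxx, mul_one] at h2 h3
    generalize tlam j.1 - lam j.1 = c at *
    have h4 : y ⬝ᵥ y = c ^ 2 - 2 * (c * (x ⬝ᵥ H.mulVec x)) + H.mulVec x ⬝ᵥ H.mulVec x := by
      rw [hyy]
      simp only [sub_dotProduct, dotProduct_sub, smul_dotProduct, dotProduct_smul, smul_eq_mul,
        hxx, dotProduct_comm (H.mulVec x) x]
      ring
    have h5 : c ^ 2 ≤ specNorm H ^ 2 := sq_le_sq' (abs_le.mp h1).1 (abs_le.mp h1).2
    have h6 : |c * (x ⬝ᵥ H.mulVec x)| ≤ specNorm H * specNorm H := by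
      rw [abs_mul]
      exact mul_le_mul h1 h3 (abs_nonneg _) (dk_nonneg H)
    have h7 := (abs_le.mp h6).1
    rw [h4]
    nlinarith
  have hcard : (((s : ℕ) - (r : ℕ) + 1 : ℕ) : ℝ) =
      ∑ _j : {i : Fin n // r ≤ i ∧ i ≤ s}, (1 : ℝ) := by
    rw [Finset.sum_const, nsmul_eq_mul, mul_one, Finset.card_univ]
    congr 1
    rw [Fintype.card_subtype]
    have : (Finset.univ.filter fun i : Fin n => r ≤ i ∧ i ≤ s) = Finset.Icc r s := by
      ext i
      simp
    rw [this, Fin.card_Icc]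
    have : (r : ℕ) ≤ s := hrs
    omega
  have hmain : δ ^ 2 * ((((s : ℕ) - (r : ℕ) + 1 : ℕ) : ℝ) - ∑ i, ∑ j, ((Uᵀ * tU) i j) ^ 2) ≤
      4 * specNorm H ^ 2 * (((s : ℕ) - (r : ℕ) + 1 : ℕ) : ℝ) := by
    rw [hcard, Finset.sum_comm, ← Finset.sum_sub_distrib, Finset.mul_sum, Finset.mul_sum]
    apply Finset.sum_le_sum
    intro j _
    rw [mul_one]
    exact hcol j
  generalize (((s : ℕ) - (r : ℕ) + 1 : ℕ) : ℝ) = D at hmain hcard ⊢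
  have hD : 0 ≤ D := by
    rw [hcard]
    positivity
  have hh := dk_nonneg H
  apply Real.sqrt_le_iff.mpr
  refine ⟨by positivity, ?_⟩
  rw [div_pow, le_div_iff₀ (by positivity), mul_pow, mul_pow, Real.sq_sqrt hD]
  nlinarith
end
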